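/- Let G be a strongly connected directed multigraph on n+1 vertices such that every vertex has indegree equal to outdegree equal to d ≥ 2 (multiple edges and self-loops allowed). Then for all vertices x and y, the expected hitting time of y from x by the simple random walk on G satisfies E_x[τ_y] ≤ (d/2)·n·(n+1). -/

import Mathlib

open scoped ENNReal Classical

/-- Finite-horizon iterates whose supremum is the expected hitting time of `S`
for the Markov chain with transition kernel `P`. -/
noncomputable def hitIter {V : Type*} (P : V → V → ℝ≥0∞) (S : Set V) : ℕ → V → ℝ≥0∞
  | 0 => fun _ => 0
  | (m + 1) => fun x => if x ∈ S then 0 else 1 + ∑' z, P x z * hitIter P S m z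

/-- Expected hitting time `E_x[τ_S]` of the set `S`, started from `x`, defined as the
minimal nonnegative solution of the hitting-time equations (supremum of iterates). -/
noncomputable def hitExp {V : Type*} (P : V → V → ℝ≥0∞) (S : Set V) (x : V) : ℝ≥0∞ :=
  ⨆ m, hitIter P S m x

/-- Outdegree of `x` in a directed multigraph given by edge multiplicities `E`. -/
def outdeg {V : Type*} [Fintype V] (E : V → V → ℕ) (x : V) : ℕ := ∑ y, E x y

/-- Indegree of `x`. -/
def indeg {V : Type*} [Fintype V] (E : V → V → ℕ) (x : V) : ℕ := ∑ y, E y x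

/-- Transition kernel of the simple random walk on the multigraph `E`. -/
noncomputable def stepP {V : Type*} [Fintype V] (E : V → V → ℕ) (x y : V) : ℝ≥0∞ :=
  (E x y : ℝ≥0∞) / (outdeg E x : ℝ≥0∞)

/-- Expected return time `E_i[τ_i⁺]` of the simple random walk on `E`. -/
noncomputable def retExp {V : Type*} [Fintype V] (E : V → V → ℕ) (i : V) : ℝ≥0∞ :=
  1 + ∑' z, stepP E i z * hitExp (stepP E) {i} z

/-!
The finite-horizon hitting times `f` of `y` satisfy `f x ≤ 1 + ∑ z, P x z * f z` off `y`. Sum this,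
weighted by outdegree, over a superlevel set `A = {v | f x ≤ f v}` that misses `y`. As the graph is
balanced, the contributions of the edges inside `A` cancel, and as many edges enter `A` as leave it.
Hence `cut A * (f x - f w) ≤ vol A`, where `f w` is the next value below `f x`, `cut A ≥ 1` is the
number of edges leaving `A` and `vol A ≤ d * #A` is the sum of the outdegrees over `A`. Descending
from `f x` to `f y = 0` in this way, the superlevel sets have distinct sizes in `{1, …, n}`, so the
gaps add up to at most `d * (1 + ⋯ + n)`.
-/

open Finset

section HittingTimes

variable {V : Type*} {S : Set V}

theorem hitIter_of_mem (P : V → V → ℝ≥0∞) {x : V} (hx : x ∈ S) (m : ℕ) : hitIter P S m x = 0 := by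
  cases m with
  | zero => rfl
  | succ m => exact if_pos hx

theorem hitIter_succ_of_notMem (P : V → V → ℝ≥0∞) {x : V} (hx : x ∉ S) (m : ℕ) :
    hitIter P S (m + 1) x = 1 + ∑' z, P x z * hitIter P S m z :=
  if_neg hx

theorem hitIter_le_succ (P : V → V → ℝ≥0∞) (S : Set V) (m : ℕ) (x : V) :
    hitIter P S m x ≤ hitIter P S (m + 1) x := by
  by_cases hx : x ∈ S
  · simp only [hitIter_of_mem P hx, le_refl]
  induction m generalizing x with
  | zero => exact zero_le
  | succ m ih =>
    rw [hitIter_succ_of_notMem P hx, hitIter_succ_of_notMem P hx]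
    gcongr with z
    by_cases hz : z ∈ S
    · simp only [hitIter_of_mem P hz, le_refl]
    · exact ih z hz

theorem hitIter_le_natCast {P : V → V → ℝ≥0∞} (hP : ∀ x, ∑' z, P x z ≤ 1) (m : ℕ) (x : V) :
    hitIter P S m x ≤ m := by
  induction m generalizing x with
  | zero => exact zero_le
  | succ m ih =>
    by_cases hx : x ∈ S
    · exact (hitIter_of_mem P hx _).trans_le zero_le
    calc hitIter P S (m + 1) x = 1 + ∑' z, P x z * hitIter P S m z := hitIter_succ_of_notMem P hx m
      _ ≤ 1 + ∑' z, P x z * m := by gcongr with z; exact ih z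
      _ = 1 + (∑' z, P x z) * m := by rw [ENNReal.tsum_mul_right]
      _ ≤ 1 + 1 * m := by gcongr; exact hP x
      _ = (m + 1 : ℕ) := by push_cast; ring

end HittingTimes

section Cuts

variable {V : Type*} [Fintype V] {E : V → V → ℕ} {A : Finset V}

/-- The number of edges, counted with multiplicity, that leave the vertex set `A`. -/
noncomputable def cutSize (E : V → V → ℕ) (A : Finset V) : ℕ := ∑ x ∈ A, ∑ z ∈ Aᶜ, E x z

theorem sum_out_add_sum_in_compl {M : Type*} [AddCommMonoid M] (A : Finset V) (g : V → V → M) :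
    ∑ x ∈ A, ∑ z, g x z + ∑ x ∈ A, ∑ z ∈ Aᶜ, g z x =
      ∑ x ∈ A, ∑ z, g z x + ∑ x ∈ A, ∑ z ∈ Aᶜ, g x z := by
  have hinside : ∑ x ∈ A, ∑ z ∈ A, g z x = ∑ x ∈ A, ∑ z ∈ A, g x z := sum_comm
  simp only [← sum_add_sum_compl A, sum_add_distrib, hinside]
  exact add_right_comm _ _ _

theorem cutSize_compl (hbal : ∀ x, indeg E x = outdeg E x) (A : Finset V) :
    cutSize E Aᶜ = cutSize E A := by
  have hvol : ∑ x ∈ A, ∑ z, E z x = ∑ x ∈ A, ∑ z, E x z := sum_congr rfl fun x _ => hbal x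
  have hflow := sum_out_add_sum_in_compl A E
  rw [hvol, sum_comm (s := A) (t := Aᶜ) (f := fun x z => E z x)] at hflow
  simpa only [cutSize, compl_compl] using Nat.add_left_cancel hflow

theorem cutSize_pos {a y : V} (hay : Relation.ReflTransGen (fun u v => 0 < E u v) a y)
    (ha : a ∈ A) (hy : y ∉ A) : 0 < cutSize E A := by
  induction hay using Relation.ReflTransGen.head_induction_on with
  | refl => exact absurd ha hy
  | @head u v huv _ ih =>
    by_cases hv : v ∈ A
    · exact ih hv
    calc 0 < E u v := huv
      _ ≤ ∑ z ∈ Aᶜ, E u z := single_le_sum_of_canonicallyOrdered (mem_compl.2 hv)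
      _ ≤ cutSize E A :=
        single_le_sum_of_canonicallyOrdered (f := fun x => ∑ z ∈ Aᶜ, E x z) ha

end Cuts

section Descent

variable {V R : Type*} [Fintype V] [CommSemiring R] [LinearOrder R] [IsOrderedRing R]

theorem le_add_mul_choose_two_of_gap_le {f : V → R} {b D : R} (hD : 0 ≤ D)
    (hgap : ∀ x, b < f x → ∃ w, f w < f x ∧ f x ≤ f w + D * #{v | f x ≤ f v}) (x : V) :
    f x ≤ b + D * (Fintype.card V).choose 2 := by
  suffices h : ∀ x, f x + D * (#{v | f x ≤ f v}).choose 2 ≤ b + D * (Fintype.card V).choose 2 from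
    (le_add_of_nonneg_right (by positivity)).trans (h x)
  intro x
  induction x using (Finite.wellFounded_of_trans_of_irrefl (f · < f ·)).induction with
  | _ x ih
  obtain hxb | hbx := le_or_gt (f x) b
  · gcongr
    exact card_le_univ _
  obtain ⟨w, hwx, hgap⟩ := hgap x hbx
  have hcard : #{v | f x ≤ f v} < #{v | f w ≤ f v} := by
    refine card_lt_card (ssubset_iff_of_subset ?_ |>.2 ⟨w, by simp, by simpa using hwx⟩)
    exact monotone_filter_right _ fun v _ hv => hwx.le.trans hv
  calc f x + D * (#{v | f x ≤ f v}).choose 2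
      ≤ f w + D * #{v | f x ≤ f v} + D * (#{v | f x ≤ f v}).choose 2 := by gcongr
    _ = f w + D * (#{v | f x ≤ f v} + 1).choose 2 := by
      rw [Nat.choose_succ_succ', Nat.choose_one_right]; push_cast; ring
    _ ≤ f w + D * (#{v | f w ≤ f v}).choose 2 := by
      gcongr
      exact hcard
    _ ≤ b + D * (Fintype.card V).choose 2 := ih w hwx

end Descent

/-- `f` satisfies `f x ≤ 1 + ∑ z, P x z * f z` for every `x ≠ y`, where `P` is the kernel of the
simple random walk on `E`: the hitting-time equations of `{y}` with `≤` for `=`. Both sides are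
multiplied by the outdegree, so that the definition makes sense without division. -/
def IsHittingSubsolution {V R : Type*} [Fintype V] [Semiring R] [LE R] (E : V → V → ℕ) (y : V)
    (f : V → R) : Prop :=
  ∀ x, x ≠ y → (outdeg E x : R) * f x ≤ outdeg E x + ∑ z, (E x z : R) * f z

namespace IsHittingSubsolution

variable {V : Type*} [Fintype V] {E : V → V → ℕ} {y : V}

theorem toReal {f : V → ℝ≥0∞} (hf : IsHittingSubsolution E y f) (hfin : ∀ x, f x ≠ ∞) :
    IsHittingSubsolution E y fun x => (f x).toReal := by
  lift f to V → NNReal using hfin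
  intro x hx
  have hfx : (outdeg E x : ℝ≥0∞) * f x ≤ outdeg E x + ∑ z, (E x z : ℝ≥0∞) * f z := hf x hx
  simp only [ENNReal.coe_toReal]
  exact_mod_cast hfx

variable {R : Type*} [CommRing R] [LinearOrder R] [IsStrictOrderedRing R] {f : V → R}

theorem cutSize_mul_le (hf : IsHittingSubsolution E y f) (hbal : ∀ x, indeg E x = outdeg E x)
    {A : Finset V} (hy : y ∉ A) {s t : R} (ht : ∀ x ∈ A, t ≤ f x) (hs : ∀ z ∉ A, f z ≤ s) :
    cutSize E A * t ≤ cutSize E A * s + ((∑ x ∈ A, outdeg E x : ℕ) : R) := by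
  have hsub : ∑ x ∈ A, (outdeg E x : R) * f x ≤
      ((∑ x ∈ A, outdeg E x : ℕ) : R) + ∑ x ∈ A, ∑ z, (E x z : R) * f z := by
    rw [Nat.cast_sum, ← sum_add_distrib]
    exact sum_le_sum fun x hx => hf x (ne_of_mem_of_not_mem hx hy)
  have hflow := sum_out_add_sum_in_compl A fun x z => (E x z : R) * f z
  have hindeg : ∑ x ∈ A, ∑ z, (E z x : R) * f x = ∑ x ∈ A, (outdeg E x : R) * f x := by
    simp only [← hbal, indeg, Nat.cast_sum, sum_mul]
  have hin : cutSize E A * t ≤ ∑ x ∈ A, ∑ z ∈ Aᶜ, (E z x : R) * f x := by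
    rw [← cutSize_compl hbal, cutSize, compl_compl, sum_comm]
    push_cast
    simp only [sum_mul]
    gcongr with x hx
    exact ht x hx
  have hout : ∑ x ∈ A, ∑ z ∈ Aᶜ, (E x z : R) * f z ≤ cutSize E A * s := by
    rw [cutSize]
    push_cast
    simp only [sum_mul]
    gcongr with x _ z hz
    exact hs z (mem_compl.1 hz)
  linarith

theorem le_add_sum_outdeg (hf : IsHittingSubsolution E y f) (hbal : ∀ x, indeg E x = outdeg E x)
    {A : Finset V} (hcut : 0 < cutSize E A) (hy : y ∉ A) {s t : R} (ht : ∀ x ∈ A, t ≤ f x)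
    (hs : ∀ z ∉ A, f z ≤ s) : t ≤ s + ((∑ x ∈ A, outdeg E x : ℕ) : R) := by
  obtain hts | hst := le_total t s
  · exact hts.trans (le_add_of_nonneg_right (Nat.cast_nonneg _))
  have hcut' : (1 : R) ≤ cutSize E A := by exact_mod_cast hcut
  have hone : t - s ≤ cutSize E A * (t - s) := le_mul_of_one_le_left (sub_nonneg.2 hst) hcut'
  linarith [hf.cutSize_mul_le hbal hy ht hs]

theorem le_add_mul_choose_two (hf : IsHittingSubsolution E y f)
    (hbal : ∀ x, indeg E x = outdeg E x) {d : ℕ} (hdeg : ∀ x, outdeg E x ≤ d)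
    (hreach : ∀ x, Relation.ReflTransGen (fun a b => 0 < E a b) x y) (x : V) :
    f x ≤ f y + d * (Fintype.card V).choose 2 := by
  refine le_add_mul_choose_two_of_gap_le (Nat.cast_nonneg d) (fun x hyx => ?_) x
  set A : Finset V := {v | f x ≤ f v} with hA
  have mem_A {v : V} : v ∈ A ↔ f x ≤ f v := by rw [hA, mem_filter_univ]
  have hyA : y ∉ A := by rwa [mem_A, not_le]
  obtain ⟨w, hwA, hmax⟩ := exists_max_image Aᶜ f ⟨y, mem_compl.2 hyA⟩
  have hvol : ∑ v ∈ A, outdeg E v ≤ d * #A := by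
    simpa only [smul_eq_mul, mul_comm] using sum_le_card_nsmul A _ d fun v _ => hdeg v
  refine ⟨w, by simpa only [mem_compl, mem_A, not_le] using hwA, ?_⟩
  calc f x ≤ f w + ((∑ v ∈ A, outdeg E v : ℕ) : R) :=
        hf.le_add_sum_outdeg hbal (cutSize_pos (hreach x) (mem_A.2 le_rfl) hyA) hyA
          (fun v hv => mem_A.1 hv) fun v hv => hmax v (mem_compl.2 hv)
    _ ≤ f w + d * #A := by gcongr; exact_mod_cast hvol

end IsHittingSubsolution

section SimpleRandomWalk

variable {V : Type*} [Fintype V]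

theorem tsum_stepP_le_one (E : V → V → ℕ) (x : V) : ∑' z, stepP E x z ≤ 1 := by
  simp only [tsum_fintype, stepP, div_eq_mul_inv, ← sum_mul, ← Nat.cast_sum]
  exact ENNReal.mul_inv_le_one _

theorem outdeg_mul_stepP (E : V → V → ℕ) (x z : V) :
    (outdeg E x : ℝ≥0∞) * stepP E x z = E x z := by
  refine ENNReal.mul_div_cancel' (fun h => ?_) fun h => absurd h (ENNReal.natCast_ne_top _)
  rw [Nat.cast_eq_zero, outdeg, sum_eq_zero_iff] at h
  rw [h z (mem_univ z), Nat.cast_zero]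

theorem isHittingSubsolution_hitIter (E : V → V → ℕ) (y : V) (m : ℕ) :
    IsHittingSubsolution E y (hitIter (stepP E) {y} m) := by
  intro x hx
  calc (outdeg E x : ℝ≥0∞) * hitIter (stepP E) {y} m x
      ≤ outdeg E x * hitIter (stepP E) {y} (m + 1) x := by
        gcongr
        exact hitIter_le_succ _ _ m x
    _ = outdeg E x * (1 + ∑ z, stepP E x z * hitIter (stepP E) {y} m z) := by
        rw [hitIter_succ_of_notMem _ (Set.mem_singleton_iff.not.2 hx), tsum_fintype]
    _ = outdeg E x + ∑ z, (E x z : ℝ≥0∞) * hitIter (stepP E) {y} m z := by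
        simp only [mul_add, mul_one, mul_sum, ← mul_assoc, outdeg_mul_stepP]

theorem hitExp_stepP_le_mul_choose_two {E : V → V → ℕ} (hbal : ∀ x, indeg E x = outdeg E x) {d : ℕ}
    (hdeg : ∀ x, outdeg E x ≤ d) {y : V}
    (hreach : ∀ x, Relation.ReflTransGen (fun a b => 0 < E a b) x y) (x : V) :
    hitExp (stepP E) {y} x ≤ ((d * (Fintype.card V).choose 2 : ℕ) : ℝ≥0∞) := by
  refine iSup_le fun m => ?_
  have hfin (v : V) : hitIter (stepP E) {y} m v ≠ ∞ :=
    ne_top_of_le_ne_top (ENNReal.natCast_ne_top m) (hitIter_le_natCast (tsum_stepP_le_one E) m v)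
  have hbound :=
    ((isHittingSubsolution_hitIter E y m).toReal hfin).le_add_mul_choose_two hbal hdeg hreach x
  rw [hitIter_of_mem (stepP E) (Set.mem_singleton y), ENNReal.toReal_zero, zero_add] at hbound
  rw [← ENNReal.toReal_le_toReal (hfin x) (ENNReal.natCast_ne_top _), ENNReal.toReal_natCast]
  exact_mod_cast hbound

end SimpleRandomWalk

theorem general_hitting_time_bound_general
    {V : Type*} [Fintype V] (n d : ℕ) (hcard : Fintype.card V = n + 1) (E : V → V → ℕ)
    (hbal : ∀ x : V, indeg E x = outdeg E x) (hdeg : ∀ x : V, outdeg E x ≤ d) (y : V)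
    (hreach : ∀ x : V, Relation.ReflTransGen (fun a b => 0 < E a b) x y) (x : V) :
    hitExp (stepP E) {y} x ≤ ((d * n * (n + 1) : ℕ) : ℝ≥0∞) / 2 := by
  have hchoose : d * (n + 1).choose 2 * 2 = d * n * (n + 1) := by
    rw [mul_assoc d, ← Nat.add_one_mul_choose_eq, Nat.choose_one_right]
    ring
  rw [ENNReal.le_div_iff_mul_le (.inl two_ne_zero) (.inl ENNReal.ofNat_ne_top), ← hchoose,
    Nat.cast_mul, Nat.cast_ofNat, ← hcard]
  gcongr
  exact hitExp_stepP_le_mul_choose_two hbal hdeg hreach x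

/-- General upper bound: on a strongly connected multigraph on `n+1` vertices with
all in- and out-degrees equal to `d ≥ 2`, every expected hitting time is at most
`(d/2)·n·(n+1)`. -/
theorem general_hitting_time_bound
    {V : Type*} [Fintype V] (n d : ℕ) (hd : 2 ≤ d)
    (hcard : Fintype.card V = n + 1)
    (E : V → V → ℕ)
    (hout : ∀ x : V, outdeg E x = d)
    (hin : ∀ x : V, indeg E x = d)
    (hsc : ∀ x y : V, Relation.ReflTransGen (fun a b => 0 < E a b) x y) :
    ∀ x y : V, hitExp (stepP E) {y} x ≤ ((d * n * (n + 1) : ℕ) : ℝ≥0∞) / 2 :=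
  fun x y => general_hitting_time_bound_general n d hcard E
    (fun v => (hin v).trans (hout v).symm) (fun v => (hout v).le) y (fun v => hsc v y) x
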